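/- Let A = (Q, X, q₀, T, F) be an updateable timed automaton, consider the Kleene iteration {G^i(q)} with the red/green colouring, and let K = 1 + |Q|·|X|·(|X|+1). If there exists a state p ∈ Q such that G^K(p) is red, then there is no i such that G^i(q) is green for all q ∈ Q. -/

import Mathlib

open scoped NNReal

/-! ## Atomic constraints over a set of clocks -/

/-- Comparison operator `◁ ∈ {<, ≤}`. -/
inductive Ineq : Type where
  | lt : Ineq
  | le : Ineq
deriving DecidableEq

/-- Interpretation of a comparison operator on reals. -/
def Ineq.holds : Ineq → ℝ → ℝ → Prop
  | .lt, a, b => a < b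
  | .le, a, b => a ≤ b

/-- Atomic constraints over clocks `X`:
`upper x o c` is `x ◁ c` (c ∈ ℕ), `lower c o x` is `c ◁ x` (c ∈ ℕ),
`diag x y o d` is `x - y ◁ d` (d ∈ ℤ). -/
inductive Constr (X : Type) : Type where
  | upper : X → Ineq → ℕ → Constr X
  | lower : ℕ → Ineq → X → Constr X
  | diag : X → X → Ineq → ℤ → Constr X
deriving DecidableEq

namespace Constr

/-- Is the constraint a diagonal constraint `x - y ◁ d`? -/
def isDiag {X : Type} : Constr X → Bool
  | .diag _ _ _ _ => true
  | _ => false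

/-- The integer constant of a constraint. -/
def constOf {X : Type} : Constr X → ℤ
  | .upper _ _ c => (c : ℤ)
  | .lower c _ _ => (c : ℤ)
  | .diag _ _ _ d => d

/-- Satisfaction of a constraint by a clock valuation `v : X → ℝ≥0`. -/
def sat {X : Type} (v : X → ℝ≥0) : Constr X → Prop
  | .upper x o c => o.holds (v x : ℝ) (c : ℝ)
  | .lower c o x => o.holds (c : ℝ) (v x : ℝ)
  | .diag x y o d => o.holds ((v x : ℝ) - (v y : ℝ)) (d : ℝ)

end Constr

/-- Time elapse: `v + δ`. -/
def shift {X : Type} (v : X → ℝ≥0) (δ : ℝ≥0) : X → ℝ≥0 := fun x => v x + δ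

/-- The relation `v ⊑_G v'`: for all `φ ∈ G` and all delays `δ ≥ 0`,
`v + δ ⊨ φ` implies `v' + δ ⊨ φ`. -/
def simG {X : Type} (G : Set (Constr X)) (v v' : X → ℝ≥0) : Prop :=
  ∀ φ ∈ G, ∀ δ : ℝ≥0, Constr.sat (shift v δ) φ → Constr.sat (shift v' δ) φ

/-- `Z ⊑_G Z'` on sets of valuations. -/
def simGZ {X : Type} (G : Set (Constr X)) (Z Z' : Set (X → ℝ≥0)) : Prop :=
  ∀ v ∈ Z, ∃ v' ∈ Z', simG G v v'

open Classical in
/-- `[R]v`: reset the clocks in `R` to `0`. -/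
noncomputable def reset {X : Type} (R : Set X) (v : X → ℝ≥0) : X → ℝ≥0 :=
  fun x => if x ∈ R then 0 else v x

/-- Weakest precondition `wp(⊑_φ, R)` of a single constraint over a reset. -/
def wpReset {X : Type} (R : Set X) : Constr X → Set (Constr X)
  | .upper x o c => {ψ | x ∉ R ∧ ψ = .upper x o c}
  | .lower c o x => {ψ | x ∉ R ∧ ψ = .lower c o x}
  | .diag x y o d =>
      {ψ | (x ∉ R ∧ y ∉ R ∧ ψ = .diag x y o d) ∨
           (x ∉ R ∧ y ∈ R ∧ 0 ≤ d ∧ ψ = .upper x o d.toNat) ∨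
           (x ∈ R ∧ y ∉ R ∧ 0 ≤ -d ∧ ψ = .lower (-d).toNat o y)}

/-- Weakest precondition `wp(⊑_G, R)` of a set of constraints over a reset. -/
def wpResetSet {X : Type} (R : Set X) (G : Set (Constr X)) : Set (Constr X) :=
  ⋃ φ ∈ G, wpReset R φ

/-! ## Timed automata -/

/-- A transition: source state, guard (finite conjunction of constraints),
reset set, target state. -/
abbrev TTrans (Q X : Type) : Type := Q × Finset (Constr X) × Set X × Q

def TTrans.src {Q X : Type} (t : TTrans Q X) : Q := t.1
def TTrans.grd {Q X : Type} (t : TTrans Q X) : Finset (Constr X) := t.2.1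
def TTrans.rst {Q X : Type} (t : TTrans Q X) : Set X := t.2.2.1
def TTrans.tgt {Q X : Type} (t : TTrans Q X) : Q := t.2.2.2

/-- A timed automaton. -/
structure TA (Q X : Type) : Type where
  init : Q
  trans : Finset (TTrans Q X)
  acc : Set Q

/-- Action step of a timed automaton along transition `t`. -/
def Step {Q X : Type} (A : TA Q X) (t : TTrans Q X) (c c' : Q × (X → ℝ≥0)) : Prop :=
  t ∈ A.trans ∧ TTrans.src t = c.1 ∧ (∀ φ ∈ TTrans.grd t, Constr.sat c.2 φ) ∧
    c'.1 = TTrans.tgt t ∧ c'.2 = reset (TTrans.rst t) c.2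

/-- `r` is a simulation on the configurations of `A`: a reflexive transitive
relation, relating only configurations with equal states, compatible with
delays and action transitions. -/
def IsSimulation {Q X : Type} (A : TA Q X)
    (r : (Q × (X → ℝ≥0)) → (Q × (X → ℝ≥0)) → Prop) : Prop :=
  Reflexive r ∧ Transitive r ∧
  ∀ q v q' v', r (q, v) (q', v') →
    q = q' ∧
    (∀ δ : ℝ≥0, ∃ δ' : ℝ≥0, r (q, shift v δ) (q, shift v' δ')) ∧
    (∀ t c₁, Step A t (q, v) c₁ →
      ∃ v₁', Step A t (q, v') (c₁.1, v₁') ∧ r c₁ (c₁.1, v₁'))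

/-- The state-based guard equations:
`G(q) = ⋃_{(q,g,R,q₁) ∈ T} ({g} ∪ wp(⊑_{G(q₁)}, R))`. -/
def GuardEq {Q X : Type} (A : TA Q X) (G : Q → Set (Constr X)) : Prop :=
  ∀ q, G q = ⋃ t ∈ A.trans, ⋃ (_ : TTrans.src t = q),
    ((TTrans.grd t : Set (Constr X)) ∪ wpResetSet (TTrans.rst t) (G (TTrans.tgt t)))

/-! ## LU bounds -/

def lowerConstAt {X : Type} [DecidableEq X] (x : X) : Constr X → WithBot ℕ
  | .lower c _ y => if y = x then (c : WithBot ℕ) else ⊥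
  | _ => ⊥

def upperConstAt {X : Type} [DecidableEq X] (x : X) : Constr X → WithBot ℕ
  | .upper y _ c => if y = x then (c : WithBot ℕ) else ⊥
  | _ => ⊥

/-- `L_G(x)`: maximum constant among lower-bound constraints `c ◁ x` in `G`
(`⊥ = -∞` if none). -/
def Lbound {X : Type} [DecidableEq X] (G : Finset (Constr X)) (x : X) : WithBot ℕ :=
  G.sup (lowerConstAt x)

/-- `U_G(x)`: maximum constant among upper-bound constraints `x ◁ c` in `G`
(`⊥ = -∞` if none). -/
def Ubound {X : Type} [DecidableEq X] (G : Finset (Constr X)) (x : X) : WithBot ℕ :=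
  G.sup (upperConstAt x)

/-- The LU simulation `v ≼_LU v'` for bounds functions `L U : X → ℕ ∪ {-∞}`. -/
def luSim {X : Type} (L U : X → WithBot ℕ) (v v' : X → ℝ≥0) : Prop :=
  ∀ x : X,
    (v' x < v x → (L x).map (fun c : ℕ => (c : ℝ)) < ((v' x : ℝ) : WithBot ℝ)) ∧
    (v x < v' x → (U x).map (fun c : ℕ => (c : ℝ)) < ((v x : ℝ) : WithBot ℝ))

/-- The relation `v ⊑^LU_G v'`: `v ≼_{LU(G)} v'` and every diagonal constraint
of `G` satisfied by `v` is satisfied by `v'`. -/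
def luglu {X : Type} [DecidableEq X] (G : Finset (Constr X)) (v v' : X → ℝ≥0) : Prop :=
  luSim (Lbound G) (Ubound G) v v' ∧
    ∀ φ ∈ G, φ.isDiag → Constr.sat v φ → Constr.sat v' φ

/-- Lifting a relation on valuations to sets of valuations. -/
def zoneRel {X : Type} (r : (X → ℝ≥0) → (X → ℝ≥0) → Prop) (Z Z' : Set (X → ℝ≥0)) : Prop :=
  ∀ v ∈ Z, ∃ v' ∈ Z', r v v'

/-! ## Runs of timed automata -/

/-- `stepsFrom A c l`: the alternating delay-action sequence `l` is a valid
sequence of steps of `A` starting at configuration `c`. -/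
def stepsFrom {Q X : Type} (A : TA Q X) :
    (Q × (X → ℝ≥0)) → List (ℝ≥0 × TTrans Q X) → Prop
  | _, [] => True
  | c, (δ, t) :: l =>
      t ∈ A.trans ∧ TTrans.src t = c.1 ∧
      (∀ φ ∈ TTrans.grd t, Constr.sat (shift c.2 δ) φ) ∧
      stepsFrom A (TTrans.tgt t, reset (TTrans.rst t) (shift c.2 δ)) l

/-- Configuration reached after a sequence of delay-action steps. -/
noncomputable def endConfig {Q X : Type} :
    (Q × (X → ℝ≥0)) → List (ℝ≥0 × TTrans Q X) → (Q × (X → ℝ≥0))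
  | c, [] => c
  | c, (δ, t) :: l => endConfig (TTrans.tgt t, reset (TTrans.rst t) (shift c.2 δ)) l

/-- A run of `A`: a valid sequence of delay-action steps from `(q₀, 0̄)`. -/
def TA.Run {Q X : Type} (A : TA Q X) : Type :=
  {l : List (ℝ≥0 × TTrans Q X) // stepsFrom A (A.init, fun _ => 0) l}

/-- A run is accepting if it ends in an accepting state. -/
def TA.Accepting {Q X : Type} (A : TA Q X) (r : A.Run) : Prop :=
  (endConfig (A.init, fun _ => 0) r.val).1 ∈ A.acc

/-- `A` is diagonal-free: no guard contains a diagonal constraint. -/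
def DiagFree {Q X : Type} (A : TA Q X) : Prop :=
  ∀ t ∈ A.trans, ∀ φ ∈ TTrans.grd t, ¬ φ.isDiag

/-- The (finite) set of diagonal constraints occurring in guards of `A`. -/
def diagGuards {Q X : Type} [DecidableEq X] (A : TA Q X) : Finset (Constr X) :=
  A.trans.biUnion fun t => (TTrans.grd t).filter fun φ => φ.isDiag

/-! ## Updateable timed automata -/

/-- Atomic update of a clock: `x := c` or `x := y + d`. -/
inductive AtomicUp (X : Type) : Type where
  | const : ℕ → AtomicUp X
  | add : X → ℤ → AtomicUp X
deriving DecidableEq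

/-- `up(v) : X → ℝ` (may be negative). -/
def applyUpd {X : Type} (up : X → AtomicUp X) (v : X → ℝ≥0) : X → ℝ :=
  fun x => match up x with
    | .const c => (c : ℝ)
    | .add y d => (v y : ℝ) + (d : ℝ)

/-- Weakest precondition `wp(⊑_φ, up)` of a single constraint over an update. -/
def wpUpd {X : Type} [DecidableEq X] (up : X → AtomicUp X) : Constr X → Set (Constr X)
  | .upper x o c =>
      match up x with
      | .const _ => ∅
      | .add y d => if 0 ≤ (c : ℤ) - d then {Constr.upper y o ((c : ℤ) - d).toNat} else ∅
  | .lower c o x =>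
      match up x with
      | .const _ => ∅
      | .add y d => if 0 ≤ (c : ℤ) - d then {Constr.lower ((c : ℤ) - d).toNat o y} else ∅
  | .diag x y o c =>
      match up x, up y with
      | .const _, .const _ => ∅
      | .add y₁ d₁, .const c₂ =>
          if 0 ≤ c + (c₂ : ℤ) - d₁ then {Constr.upper y₁ o (c + (c₂ : ℤ) - d₁).toNat} else ∅
      | .const c₁, .add y₂ d₂ =>
          if 0 ≤ (c₁ : ℤ) - d₂ - c then {Constr.lower ((c₁ : ℤ) - d₂ - c).toNat o y₂} else ∅
      | .add y₁ d₁, .add y₂ d₂ =>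
          if y₁ = y₂ then ∅ else {Constr.diag y₁ y₂ o (c - d₁ + d₂)}

/-- Weakest precondition `wp(⊑_G, up)` of a set of constraints over an update. -/
def wpUpdSet {X : Type} [DecidableEq X] (up : X → AtomicUp X) (G : Set (Constr X)) :
    Set (Constr X) :=
  ⋃ φ ∈ G, wpUpd up φ

/-- The set of constraints `{0 ≤ x | x ∈ X}`. -/
def nonnegConstrs (X : Type) : Set (Constr X) := {φ | ∃ x : X, φ = Constr.lower 0 Ineq.le x}

/-- A transition of an updateable timed automaton: source, guard, update, target. -/
abbrev UTrans (Q X : Type) : Type := Q × Finset (Constr X) × (X → AtomicUp X) × Q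

def UTrans.src {Q X : Type} (t : UTrans Q X) : Q := t.1
def UTrans.grd {Q X : Type} (t : UTrans Q X) : Finset (Constr X) := t.2.1
def UTrans.upd {Q X : Type} (t : UTrans Q X) : X → AtomicUp X := t.2.2.1
def UTrans.tgt {Q X : Type} (t : UTrans Q X) : Q := t.2.2.2

/-- An updateable timed automaton. -/
structure UTA (Q X : Type) : Type where
  init : Q
  trans : Finset (UTrans Q X)
  acc : Set Q

/-- Action step of an updateable timed automaton along transition `t`:
the guard holds, `up(v) ≥ 0`, and the new valuation is `up(v)`. -/
def UStep {Q X : Type} (A : UTA Q X) (t : UTrans Q X) (c c' : Q × (X → ℝ≥0)) : Prop :=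
  t ∈ A.trans ∧ UTrans.src t = c.1 ∧ (∀ φ ∈ UTrans.grd t, Constr.sat c.2 φ) ∧
    c'.1 = UTrans.tgt t ∧ ∀ x, (c'.2 x : ℝ) = applyUpd (UTrans.upd t) c.2 x

/-- `r` is a simulation on configurations of an updateable timed automaton. -/
def IsSimulationU {Q X : Type} (A : UTA Q X)
    (r : (Q × (X → ℝ≥0)) → (Q × (X → ℝ≥0)) → Prop) : Prop :=
  Reflexive r ∧ Transitive r ∧
  ∀ q v q' v', r (q, v) (q', v') →
    q = q' ∧
    (∀ δ : ℝ≥0, ∃ δ' : ℝ≥0, r (q, shift v δ) (q, shift v' δ')) ∧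
    (∀ t c₁, UStep A t (q, v) c₁ →
      ∃ v₁', UStep A t (q, v') (c₁.1, v₁') ∧ r c₁ (c₁.1, v₁'))

/-- State-based guard equations for updateable timed automata. -/
def GuardEqU {Q X : Type} [DecidableEq X] (A : UTA Q X) (G : Q → Set (Constr X)) : Prop :=
  ∀ q, G q = ⋃ t ∈ A.trans, ⋃ (_ : UTrans.src t = q),
    ((UTrans.grd t : Set (Constr X)) ∪ wpUpdSet (UTrans.upd t) (nonnegConstrs X)
      ∪ wpUpdSet (UTrans.upd t) (G (UTrans.tgt t)))

/-- Kleene iterates `G^i(q)` of the state-based guard equations. -/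
def iterG {Q X : Type} [DecidableEq X] (A : UTA Q X) : ℕ → Q → Set (Constr X)
  | 0 => fun q => ⋃ t ∈ A.trans, ⋃ (_ : UTrans.src t = q),
      ((UTrans.grd t : Set (Constr X)) ∪ wpUpdSet (UTrans.upd t) (nonnegConstrs X))
  | (i + 1) => fun q => iterG A i q ∪
      (⋃ t ∈ A.trans, ⋃ (_ : UTrans.src t = q),
        wpUpdSet (UTrans.upd t) (iterG A i (UTrans.tgt t)))

/-- `G^{i+1}(q)` is coloured red: a new diagonal constraint was added, or a new
non-diagonal constraint whose constant is strictly bigger than the constant of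
every non-diagonal constraint of the same kind on the same clock in `G^i(q)`. -/
def RedAt {Q X : Type} [DecidableEq X] (A : UTA Q X) : ℕ → Q → Prop
  | 0, _ => False
  | (i + 1), q =>
      (∃ φ : Constr X, φ ∈ iterG A (i + 1) q ∧ φ ∉ iterG A i q ∧ φ.isDiag) ∨
      (∃ (x : X) (o : Ineq) (c : ℕ),
        Constr.upper x o c ∈ iterG A (i + 1) q ∧ Constr.upper x o c ∉ iterG A i q ∧
        ∀ (o' : Ineq) (c' : ℕ), Constr.upper x o' c' ∈ iterG A i q → c' < c) ∨
      (∃ (x : X) (o : Ineq) (c : ℕ),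
        Constr.lower c o x ∈ iterG A (i + 1) q ∧ Constr.lower c o x ∉ iterG A i q ∧
        ∀ (o' : Ineq) (c' : ℕ), Constr.lower c' o' x ∈ iterG A i q → c' < c)

/-- `G^i(q)` is coloured green. -/
def GreenAt {Q X : Type} [DecidableEq X] (A : UTA Q X) (i : ℕ) (q : Q) : Prop :=
  ¬ RedAt A i q

/-- Absolute value of the constant of an atomic update. -/
def updBound {X : Type} : AtomicUp X → ℕ
  | .const c => c
  | .add _ d => d.natAbs

/-! The constraints produced by one application of `wp` are compared by dominance: `x ◁ c` is
dominated by `x ◁' c'` when `c ≤ c'`, likewise for lower bounds, and a diagonal constraint only by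
itself. Then `G^{i+1}(q)` is green iff it lies in the lower closure of `G^i(q)`, and since `wp` is
monotone for dominance, once all states are green every later iterate stays in the lower closure of
the finite set `G^i(q)`.

Monotonicity also lets a red witness at level `i + 1` be traced back to one at level `i`. Along a
backward trace longer than `|Q| (|X| + |X|²)` some state and clocks repeat, so the trace contains a
cycle whose net effect is to add a constant `e` to a constraint: `e > 0`, or `e ≠ 0` on a diagonal.
Pumping the cycle yields constraints that leave the lower closure of any finite set. -/

section Backtracking

variable {α κ : Type*} {R : α → α → Prop} {P : ℕ → α → Prop}

theorem exists_seq_of_forall_exists_pred (hP : ∀ n b, P (n + 1) b → ∃ a, P n a ∧ R a b)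
    (n : ℕ) (b : α) (hb : P n b) :
    ∃ f : ℕ → α, f n = b ∧ (∀ i ≤ n, P i (f i)) ∧ ∀ i < n, R (f i) (f (i + 1)) := by
  induction n generalizing b with
  | zero => exact ⟨fun _ => b, rfl, fun i hi => by rwa [Nat.le_zero.mp hi], by simp⟩
  | succ n ih =>
    obtain ⟨a, ha, hab⟩ := hP n b hb
    obtain ⟨f, rfl, hPf, hRf⟩ := ih a ha
    refine ⟨fun i => if i ≤ n then f i else b, by simp, fun i hi => ?_, fun i hi => ?_⟩
    · rcases Nat.le_succ_iff.mp hi with h | rfl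
      · simpa only [h, if_true] using hPf i h
      · simpa using hb
    · rcases Nat.lt_succ_iff_lt_or_eq.mp hi with h | rfl
      · simpa [h.le, Nat.succ_le_of_lt h] using hRf i h
      · simpa using hab

theorem exists_lt_reflTransGen_eq_of_card_le [Fintype κ] (key : α → κ)
    (hP : ∀ n b, P (n + 1) b → ∃ a, P n a ∧ R a b) {n : ℕ} {b : α} (hb : P n b)
    (hn : Fintype.card κ ≤ n) :
    ∃ i j a c, i < j ∧ P i a ∧ P j c ∧ Relation.ReflTransGen R a c ∧ key a = key c := by
  obtain ⟨f, -, hPf, hRf⟩ := exists_seq_of_forall_exists_pred hP n b hb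
  obtain ⟨i, j, hne, hkey⟩ := Fintype.exists_ne_map_eq_of_card_lt
    (fun i : Fin (n + 1) => key (f i)) (by simpa using Nat.lt_succ_of_le hn)
  wlog hij : i < j generalizing i j
  · exact this j i hne.symm hkey.symm (hne.lt_or_gt.resolve_left hij)
  have htrace : Relation.ReflTransGen (fun k l => R (f k) (f l)) (i : ℕ) j :=
    reflTransGen_of_succ_of_le _ (fun k hk => hRf k (by have := hk.2; omega)) (Fin.le_def.mp hij.le)
  exact ⟨i, j, f i, f j, hij, hPf i i.is_le, hPf j j.is_le, htrace.lift f fun _ _ h => h, hkey⟩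

end Backtracking

namespace Constr

variable {X : Type} {φ ψ : Constr X} {e : ℤ}

/-- The comparison operator `◁` of a constraint. -/
def op : Constr X → Ineq
  | upper _ o _ => o
  | lower _ o _ => o
  | diag _ _ o _ => o

/-- Whether a constraint is an upper bound `x ◁ c`. -/
def isUpper : Constr X → Bool
  | upper _ _ _ => true
  | _ => false

/-- The clock of a non-diagonal constraint, or the ordered pair of clocks of a diagonal one. Upper
and lower bounds are not distinguished: `wp` never turns one into the other, which is what makes
`|X| (|X| + 1)` values enough for the pigeonhole argument. -/
def clocks : Constr X → X ⊕ X × X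
  | upper x _ _ => .inl x
  | lower _ _ x => .inl x
  | diag x y _ _ => .inr (x, y)

/-- The constraint with `e` added to its constant. On non-diagonal constraints, whose constants are
natural numbers, the sum is truncated at `0`. -/
def addConst (e : ℤ) : Constr X → Constr X
  | upper x o c => upper x o (c + e).toNat
  | lower c o x => lower (c + e).toNat o x
  | diag x y o d => diag x y o (d + e)

/-- Dominance of constraints: a bound on a clock is dominated by the bounds of the same kind on the
same clock with a constant at least as large, whatever the comparison operators; a diagonal
constraint is dominated only by itself. -/
inductive Dominated : Constr X → Constr X → Prop
  | upper (x : X) (o o' : Ineq) {c c' : ℕ} (h : c ≤ c') : Dominated (upper x o c) (upper x o' c')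
  | lower (x : X) (o o' : Ineq) {c c' : ℕ} (h : c ≤ c') : Dominated (lower c o x) (lower c' o' x)
  | diag (x y : X) (o : Ineq) (d : ℤ) : Dominated (diag x y o d) (diag x y o d)

instance : Preorder (Constr X) where
  le := Dominated
  le_refl
    | upper x o _ => .upper x o o le_rfl
    | lower _ o x => .lower x o o le_rfl
    | diag x y o d => .diag x y o d
  le_trans _ _ _
    | .upper x o _ h, .upper _ _ o' h' => .upper x o o' (h.trans h')
    | .lower x o _ h, .lower _ _ o' h' => .lower x o o' (h.trans h')
    | .diag x y o d, .diag _ _ _ _ => .diag x y o d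

theorem constOf_le_of_le (h : φ ≤ ψ) : φ.constOf ≤ ψ.constOf := by
  cases h with
  | upper _ _ _ h | lower _ _ _ h => exact Int.ofNat_le.mpr h
  | diag => exact le_rfl

theorem eq_of_le_of_isDiag (h : φ ≤ ψ) (hφ : φ.isDiag) : φ = ψ := by
  cases h with
  | upper | lower => cases hφ
  | diag => rfl

theorem upper_mem_lowerClosure {x : X} {o : Ineq} {c : ℕ} {S : Set (Constr X)} :
    upper x o c ∈ lowerClosure S ↔ ∃ o' c', upper x o' c' ∈ S ∧ c ≤ c' := by
  constructor
  · rintro ⟨ψ, hS, hle⟩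
    cases hle with
    | @upper _ _ o' _ c' h => exact ⟨o', c', hS, h⟩
  · rintro ⟨o', c', hS, h⟩
    exact ⟨_, hS, .upper x o o' h⟩

theorem lower_mem_lowerClosure {x : X} {o : Ineq} {c : ℕ} {S : Set (Constr X)} :
    lower c o x ∈ lowerClosure S ↔ ∃ o' c', lower c' o' x ∈ S ∧ c ≤ c' := by
  constructor
  · rintro ⟨ψ, hS, hle⟩
    cases hle with
    | @lower _ _ o' _ c' h => exact ⟨o', c', hS, h⟩
  · rintro ⟨o', c', hS, h⟩
    exact ⟨_, hS, .lower x o o' h⟩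

theorem mem_lowerClosure_iff_of_isDiag {S : Set (Constr X)} (hφ : φ.isDiag) :
    φ ∈ lowerClosure S ↔ φ ∈ S :=
  ⟨fun ⟨_, hS, h⟩ => eq_of_le_of_isDiag h hφ ▸ hS, fun h => subset_lowerClosure h⟩

theorem isDiag_addConst (e : ℤ) (φ : Constr X) : (φ.addConst e).isDiag = φ.isDiag := by
  cases φ <;> rfl

theorem constOf_addConst (he : 0 ≤ e ∨ φ.isDiag) :
    (φ.addConst e).constOf = φ.constOf + e := by
  cases φ with
  | upper | lower =>
    have he : 0 ≤ e := he.resolve_right Bool.false_ne_true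
    exact Int.toNat_of_nonneg (by omega)
  | diag => rfl

theorem eq_addConst (hop : ψ.op = φ.op) (hclocks : ψ.clocks = φ.clocks)
    (hupper : ¬ φ.isDiag → ψ.isUpper = φ.isUpper) :
    ψ = φ.addConst (ψ.constOf - φ.constOf) := by
  cases φ <;> cases ψ <;>
    simp_all [op, clocks, isUpper, addConst, constOf, isDiag]

theorem addConst_le_self_of_nonpos (he : e ≤ 0) (hφ : ¬ φ.isDiag) : φ.addConst e ≤ φ := by
  cases φ with
  | upper x o c => exact .upper x o o (by omega)
  | lower c o x => exact .lower x o o (by omega)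
  | diag => exact absurd rfl hφ

theorem addConst_zero (φ : Constr X) : φ.addConst 0 = φ := by
  cases φ <;> simp [addConst]

theorem isDiag_iterate_addConst (e : ℤ) (φ : Constr X) (n : ℕ) :
    ((addConst e)^[n] φ).isDiag = φ.isDiag :=
  congrFun (Function.iterate_invariant (g := isDiag) (funext (isDiag_addConst e)) n) φ

theorem constOf_iterate_addConst (he : 0 ≤ e ∨ φ.isDiag) (n : ℕ) :
    ((addConst e)^[n] φ).constOf = φ.constOf + n * e := by
  induction n with
  | zero => simp
  | succ n ih =>
    rw [Function.iterate_succ_apply', constOf_addConst (by rwa [isDiag_iterate_addConst]), ih]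
    push_cast
    ring

theorem le_natAbs_of_iterate_addConst_le (hφ : ¬ φ.addConst e ≤ φ) (he : 0 ≤ e ∨ φ.isDiag)
    {n : ℕ} (hn : (addConst e)^[n] φ ≤ ψ) : n ≤ (ψ.constOf - φ.constOf).natAbs := by
  have hconst := constOf_iterate_addConst he n
  by_cases hd : φ.isDiag
  · have he0 : e ≠ 0 := fun h => hφ (by rw [h, addConst_zero])
    rw [eq_of_le_of_isDiag hn (by rwa [isDiag_iterate_addConst])] at hconst
    rw [hconst, add_sub_cancel_left, Int.natAbs_mul, Int.natAbs_natCast]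
    exact Nat.le_mul_of_pos_right n (Int.natAbs_pos.mpr he0)
  · have hpos : 0 < e := not_le.mp fun h => hφ (addConst_le_self_of_nonpos h hd)
    have hle := constOf_le_of_le hn
    have hmul : (n : ℤ) ≤ n * e := le_mul_of_one_le_right n.cast_nonneg hpos
    omega

theorem exists_iterate_addConst_notMem_lowerClosure (hφ : ¬ φ.addConst e ≤ φ)
    (he : 0 ≤ e ∨ φ.isDiag) {S : Set (Constr X)} (hS : S.Finite) :
    ∃ n : ℕ, (addConst e)^[n] φ ∉ lowerClosure S := by
  obtain ⟨B, hB⟩ := (hS.image fun ψ => (ψ.constOf - φ.constOf).natAbs).bddAbove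
  refine ⟨B + 1, fun ⟨ψ, hψ, hle⟩ => ?_⟩
  exact absurd ((le_natAbs_of_iterate_addConst_le hφ he hle).trans (hB ⟨ψ, hψ, rfl⟩))
    (Nat.not_succ_le_self B)

end Constr

section WeakestPrecondition

variable {X : Type} [DecidableEq X] {up : X → AtomicUp X} {φ φ' ψ : Constr X}

theorem mem_wpUpd_upper {x : X} {o : Ineq} {c : ℕ} :
    ψ ∈ wpUpd up (.upper x o c) ↔
      ∃ y d, ∃ c' : ℕ, up x = .add y d ∧ (c' : ℤ) = c - d ∧ ψ = .upper y o c' := by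
  cases hx : up x <;> simp only [wpUpd, hx] <;> grind

theorem mem_wpUpd_lower {x : X} {o : Ineq} {c : ℕ} :
    ψ ∈ wpUpd up (.lower c o x) ↔
      ∃ y d, ∃ c' : ℕ, up x = .add y d ∧ (c' : ℤ) = c - d ∧ ψ = .lower c' o y := by
  cases hx : up x <;> simp only [wpUpd, hx] <;> grind

theorem mem_wpUpd_diag {x y : X} {o : Ineq} {c : ℤ} :
    ψ ∈ wpUpd up (.diag x y o c) ↔
      (∃ x' d k, ∃ c' : ℕ, up x = .add x' d ∧ up y = .const k ∧ (c' : ℤ) = c + k - d ∧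
        ψ = .upper x' o c') ∨
      (∃ y' d k, ∃ c' : ℕ, up x = .const k ∧ up y = .add y' d ∧ (c' : ℤ) = k - d - c ∧
        ψ = .lower c' o y') ∨
      ∃ x' d y' d', up x = .add x' d ∧ up y = .add y' d' ∧ x' ≠ y' ∧
        ψ = .diag x' y' o (c - d + d') := by
  cases hx : up x <;> cases hy : up y <;> simp only [wpUpd, hx, hy] <;> grind

theorem finite_wpUpd (up : X → AtomicUp X) (φ : Constr X) : (wpUpd up φ).Finite := by
  cases φ <;> simp only [wpUpd] <;> (repeat' split) <;> exact Set.toFinite _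

theorem finite_wpUpdSet (up : X → AtomicUp X) {G : Set (Constr X)} (hG : G.Finite) :
    (wpUpdSet up G).Finite :=
  hG.biUnion fun φ _ => finite_wpUpd up φ

theorem op_eq_of_mem_wpUpd (h : φ' ∈ wpUpd up φ) : φ'.op = φ.op := by
  rcases φ with ⟨x, o, c⟩ | ⟨c, o, x⟩ | ⟨x, y, o, c⟩
  · obtain ⟨_, _, _, _, _, rfl⟩ := mem_wpUpd_upper.mp h
    rfl
  · obtain ⟨_, _, _, _, _, rfl⟩ := mem_wpUpd_lower.mp h
    rfl
  · rcases mem_wpUpd_diag.mp h with ⟨_, _, _, _, _, _, _, rfl⟩ | ⟨_, _, _, _, _, _, _, rfl⟩ |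
      ⟨_, _, _, _, _, _, _, rfl⟩ <;> rfl

theorem isDiag_of_mem_wpUpd (h : φ' ∈ wpUpd up φ) (hφ' : φ'.isDiag) : φ.isDiag := by
  rcases φ with ⟨x, o, c⟩ | ⟨c, o, x⟩ | ⟨x, y, o, c⟩
  · obtain ⟨_, _, _, _, _, rfl⟩ := mem_wpUpd_upper.mp h
    exact hφ'
  · obtain ⟨_, _, _, _, _, rfl⟩ := mem_wpUpd_lower.mp h
    exact hφ'
  · rfl

theorem isUpper_eq_of_mem_wpUpd (h : φ' ∈ wpUpd up φ) (hφ : ¬ φ.isDiag) :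
    φ'.isUpper = φ.isUpper := by
  rcases φ with ⟨x, o, c⟩ | ⟨c, o, x⟩ | ⟨x, y, o, c⟩
  · obtain ⟨_, _, _, _, _, rfl⟩ := mem_wpUpd_upper.mp h
    rfl
  · obtain ⟨_, _, _, _, _, rfl⟩ := mem_wpUpd_lower.mp h
    rfl
  · exact absurd rfl hφ

theorem exists_mem_wpUpd_ge_of_le (hle : φ ≤ ψ) (h : φ' ∈ wpUpd up φ) :
    ∃ ψ' ∈ wpUpd up ψ, φ' ≤ ψ' := by
  cases hle with
  | @upper x o o' c₁ c₂ hc =>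
    obtain ⟨y, d, c', hx, hc', rfl⟩ := mem_wpUpd_upper.mp h
    exact ⟨.upper y o' (c' + (c₂ - c₁)), mem_wpUpd_upper.mpr ⟨y, d, _, hx, by omega, rfl⟩,
      .upper y o o' (Nat.le_add_right _ _)⟩
  | @lower x o o' c₁ c₂ hc =>
    obtain ⟨y, d, c', hx, hc', rfl⟩ := mem_wpUpd_lower.mp h
    exact ⟨.lower (c' + (c₂ - c₁)) o' y, mem_wpUpd_lower.mpr ⟨y, d, _, hx, by omega, rfl⟩,
      .lower y o o' (Nat.le_add_right _ _)⟩
  | diag => exact ⟨φ', h, le_rfl⟩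

theorem addConst_mem_wpUpd {e : ℤ} (h : φ' ∈ wpUpd up φ) (hd : φ.isDiag → φ'.isDiag)
    (he : 0 ≤ e ∨ φ.isDiag) : φ'.addConst e ∈ wpUpd up (φ.addConst e) := by
  rcases φ with ⟨x, o, c⟩ | ⟨c, o, x⟩ | ⟨x, y, o, c⟩
  · obtain ⟨y, d, c', hx, hc', rfl⟩ := mem_wpUpd_upper.mp h
    have he : 0 ≤ e := he.resolve_right Bool.false_ne_true
    exact mem_wpUpd_upper.mpr ⟨y, d, _, hx, by omega, rfl⟩
  · obtain ⟨y, d, c', hx, hc', rfl⟩ := mem_wpUpd_lower.mp h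
    have he : 0 ≤ e := he.resolve_right Bool.false_ne_true
    exact mem_wpUpd_lower.mpr ⟨y, d, _, hx, by omega, rfl⟩
  · rcases mem_wpUpd_diag.mp h with ⟨_, _, _, _, _, _, _, rfl⟩ | ⟨_, _, _, _, _, _, _, rfl⟩ |
      ⟨x', d, y', d', hx, hy, hne, rfl⟩
    · exact absurd (hd rfl) Bool.false_ne_true
    · exact absurd (hd rfl) Bool.false_ne_true
    · exact mem_wpUpd_diag.mpr (.inr (.inr ⟨x', d, y', d', hx, hy, hne, by
        simp only [Constr.addConst, Constr.diag.injEq, true_and]; ring⟩))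

end WeakestPrecondition

section KleeneIteration

open Relation (ReflTransGen)

variable {Q X : Type} [DecidableEq X] {A : UTA Q X} {a b : Q × Constr X} {q : Q}

/-- Backward propagation of constraints: `(q', φ)` steps to `(q, φ')` when some transition from `q`
to `q'` with update `up` has `φ' ∈ wp(⊑_φ, up)`. -/
def WpStep (A : UTA Q X) (a b : Q × Constr X) : Prop :=
  ∃ t ∈ A.trans, UTrans.src t = b.1 ∧ UTrans.tgt t = a.1 ∧ b.2 ∈ wpUpd (UTrans.upd t) a.2

/-- `(q, φ)` witnesses that `G^{i+1}(q)` is red: no constraint of `G^i(q)` dominates the member `φ`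
of `G^{i+1}(q)`. -/
def RedWitness (A : UTA Q X) (i : ℕ) (a : Q × Constr X) : Prop :=
  a.2 ∈ iterG A (i + 1) a.1 ∧ a.2 ∉ lowerClosure (iterG A i a.1)

theorem mem_iterG_succ {i : ℕ} :
    b.2 ∈ iterG A (i + 1) b.1 ↔
      b.2 ∈ iterG A i b.1 ∨ ∃ a, a.2 ∈ iterG A i a.1 ∧ WpStep A a b := by
  simp only [iterG, wpUpdSet, Set.mem_union, Set.mem_iUnion, exists_prop]
  refine or_congr_right ⟨?_, ?_⟩
  · rintro ⟨t, ht, hsrc, φ, hφ, hwp⟩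
    exact ⟨(UTrans.tgt t, φ), hφ, t, ht, hsrc, rfl, hwp⟩
  · rintro ⟨a, ha, t, ht, hsrc, htgt, hwp⟩
    exact ⟨t, ht, hsrc, a.2, htgt ▸ ha, hwp⟩

theorem iterG_mono (A : UTA Q X) (q : Q) : Monotone fun i => iterG A i q :=
  monotone_nat_of_le_succ fun _ => Set.subset_union_left

theorem finite_iterG [Finite X] (A : UTA Q X) (i : ℕ) (q : Q) : (iterG A i q).Finite := by
  have hnonneg : (nonnegConstrs X).Finite :=
    (Set.finite_range fun x : X => Constr.lower 0 .le x).subset fun _ ⟨x, hx⟩ => ⟨x, hx.symm⟩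
  induction i generalizing q with
  | zero =>
    exact A.trans.finite_toSet.biUnion fun t _ => Set.finite_iUnion fun _ =>
      (UTrans.grd t).finite_toSet.union (finite_wpUpdSet _ hnonneg)
  | succ i ih =>
    exact (ih q).union <| A.trans.finite_toSet.biUnion fun t _ => Set.finite_iUnion fun _ =>
      finite_wpUpdSet _ (ih _)

theorem redAt_succ_iff {i : ℕ} : RedAt A (i + 1) q ↔ ∃ φ, RedWitness A i (q, φ) := by
  constructor
  · rintro (⟨φ, hφ, hnew, hdiag⟩ | ⟨x, o, c, hφ, -, hlt⟩ | ⟨x, o, c, hφ, -, hlt⟩)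
    · exact ⟨φ, hφ, mt (Constr.mem_lowerClosure_iff_of_isDiag hdiag).mp hnew⟩
    · refine ⟨_, hφ, mt Constr.upper_mem_lowerClosure.mp ?_⟩
      rintro ⟨o', c', hold, hle⟩
      exact (hlt o' c' hold).not_ge hle
    · refine ⟨_, hφ, mt Constr.lower_mem_lowerClosure.mp ?_⟩
      rintro ⟨o', c', hold, hle⟩
      exact (hlt o' c' hold).not_ge hle
  · rintro ⟨φ, hφ, hdom⟩
    have hnew : φ ∉ iterG A i q := mt (fun h => subset_lowerClosure h) hdom
    cases φ with
    | upper x o c =>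
      exact .inr (.inl ⟨x, o, c, hφ, hnew, fun o' c' hold => not_le.mp fun hle =>
        hdom (Constr.upper_mem_lowerClosure.mpr ⟨o', c', hold, hle⟩)⟩)
    | lower c o x =>
      exact .inr (.inr ⟨x, o, c, hφ, hnew, fun o' c' hold => not_le.mp fun hle =>
        hdom (Constr.lower_mem_lowerClosure.mpr ⟨o', c', hold, hle⟩)⟩)
    | diag x y o d => exact .inl ⟨_, hφ, hnew, rfl⟩

theorem WpStep.exists_ge_of_le {ψ : Constr X} (h : WpStep A a b) (hle : a.2 ≤ ψ) :
    ∃ ψ', WpStep A (a.1, ψ) (b.1, ψ') ∧ b.2 ≤ ψ' := by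
  obtain ⟨t, ht, hsrc, htgt, hwp⟩ := h
  obtain ⟨ψ', hψ', hle'⟩ := exists_mem_wpUpd_ge_of_le hle hwp
  exact ⟨ψ', ⟨t, ht, hsrc, htgt, hψ'⟩, hle'⟩

theorem WpStep.mem_lowerClosure_iterG_succ {i : ℕ} (h : WpStep A a b)
    (ha : a.2 ∈ lowerClosure (iterG A i a.1)) : b.2 ∈ lowerClosure (iterG A (i + 1) b.1) := by
  obtain ⟨ψ, hψ, hle⟩ := ha
  obtain ⟨ψ', hstep, hle'⟩ := h.exists_ge_of_le hle
  exact ⟨ψ', mem_iterG_succ (b := (b.1, ψ')).mpr (.inr ⟨_, hψ, hstep⟩), hle'⟩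

theorem RedWitness.exists_pred (i : ℕ) (b : Q × Constr X) (hb : RedWitness A (i + 1) b) :
    ∃ a, RedWitness A i a ∧ WpStep A a b := by
  obtain ⟨hmem, hnew⟩ := hb
  rcases mem_iterG_succ.mp hmem with hold | ⟨a, ha, hab⟩
  · exact absurd (subset_lowerClosure hold) hnew
  · exact ⟨a, ⟨ha, fun h => hnew (hab.mem_lowerClosure_iterG_succ h)⟩, hab⟩

theorem iterG_subset_lowerClosure_of_forall_greenAt {i j : ℕ} (hgreen : ∀ q, GreenAt A (i + 1) q)
    (hij : i ≤ j) (q : Q) : iterG A j q ⊆ lowerClosure (iterG A i q) := by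
  have hsucc (q) : iterG A (i + 1) q ⊆ lowerClosure (iterG A i q) := fun φ hφ =>
    by_contra fun h => hgreen q (redAt_succ_iff.mpr ⟨φ, hφ, h⟩)
  induction hij generalizing q with
  | refl => exact subset_lowerClosure
  | step _ ih =>
    intro φ hφ
    rcases mem_iterG_succ (b := (q, φ)).mp hφ with hold | ⟨a, ha, hstep⟩
    · exact ih q hold
    · exact lowerClosure_min (hsucc q) (lowerClosure _).lower
        (hstep.mem_lowerClosure_iterG_succ (ih a.1 ha))

theorem exists_mem_iterG_of_reflTransGen {i : ℕ} (h : ReflTransGen (WpStep A) a b)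
    (ha : a.2 ∈ iterG A i a.1) : ∃ j, b.2 ∈ iterG A j b.1 := by
  induction h with
  | refl => exact ⟨i, ha⟩
  | tail _ hstep ih =>
    obtain ⟨j, hj⟩ := ih
    exact ⟨j + 1, mem_iterG_succ.mpr (.inr ⟨_, hj, hstep⟩)⟩

theorem op_eq_of_reflTransGen (h : ReflTransGen (WpStep A) a b) : b.2.op = a.2.op := by
  induction h with
  | refl => rfl
  | tail _ hstep ih =>
    obtain ⟨_, _, _, _, hwp⟩ := hstep
    exact (op_eq_of_mem_wpUpd hwp).trans ih

theorem isDiag_of_reflTransGen (h : ReflTransGen (WpStep A) a b) (hb : b.2.isDiag) :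
    a.2.isDiag := by
  induction h with
  | refl => exact hb
  | tail _ hstep ih =>
    obtain ⟨_, _, _, _, hwp⟩ := hstep
    exact ih (isDiag_of_mem_wpUpd hwp hb)

theorem isUpper_eq_of_reflTransGen (h : ReflTransGen (WpStep A) a b) (ha : ¬ a.2.isDiag) :
    b.2.isUpper = a.2.isUpper := by
  induction h with
  | refl => rfl
  | tail hab hstep ih =>
    obtain ⟨_, _, _, _, hwp⟩ := hstep
    exact (isUpper_eq_of_mem_wpUpd hwp fun h => ha (isDiag_of_reflTransGen hab h)).trans ih

theorem reflTransGen_addConst {e : ℤ} (h : ReflTransGen (WpStep A) a b)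
    (hd : a.2.isDiag → b.2.isDiag) (he : 0 ≤ e ∨ a.2.isDiag) :
    ReflTransGen (WpStep A) (a.1, a.2.addConst e) (b.1, b.2.addConst e) := by
  induction h with
  | refl => exact .refl
  | @tail b c hab hstep ih =>
    obtain ⟨t, ht, hsrc, htgt, hwp⟩ := hstep
    have hb (ha : a.2.isDiag) : b.2.isDiag := isDiag_of_mem_wpUpd hwp (hd ha)
    have hc (h : b.2.isDiag) : c.2.isDiag := hd (isDiag_of_reflTransGen hab h)
    exact (ih hb).tail ⟨t, ht, hsrc, htgt, addConst_mem_wpUpd hwp hc (he.imp_right hb)⟩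

theorem reflTransGen_iterate_addConst {φ : Constr X} {e : ℤ} (he : 0 ≤ e ∨ φ.isDiag)
    (h : ReflTransGen (WpStep A) (q, φ) (q, φ.addConst e)) (n : ℕ) :
    ReflTransGen (WpStep A) (q, φ) (q, (Constr.addConst e)^[n] φ) := by
  induction n with
  | zero => exact .refl
  | succ n ih =>
    rw [Function.iterate_succ_apply']
    have hdiag (hφ : φ.isDiag) : ((Constr.addConst e)^[n] φ).isDiag := by
      rwa [Constr.isDiag_iterate_addConst]
    exact h.trans (reflTransGen_addConst ih hdiag he)

theorem exists_redAt_succ_of_cycle [Finite X] {φ ψ : Constr X} {j : ℕ} (hφ : φ ∈ iterG A j q)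
    (hcycle : ReflTransGen (WpStep A) (q, φ) (q, ψ)) (hclocks : ψ.clocks = φ.clocks)
    (hnle : ¬ ψ ≤ φ) (i : ℕ) : ∃ q', RedAt A (i + 1) q' := by
  by_contra! hgreen
  obtain ⟨e, rfl⟩ : ∃ e, ψ = φ.addConst e :=
    ⟨_, Constr.eq_addConst (op_eq_of_reflTransGen hcycle) hclocks
      (isUpper_eq_of_reflTransGen hcycle)⟩
  have he : 0 ≤ e ∨ φ.isDiag := by
    by_contra! h
    exact hnle (Constr.addConst_le_self_of_nonpos h.1.le h.2)
  obtain ⟨n, hn⟩ := Constr.exists_iterate_addConst_notMem_lowerClosure hnle he (finite_iterG A i q)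
  obtain ⟨k, hk⟩ := exists_mem_iterG_of_reflTransGen (reflTransGen_iterate_addConst he hcycle n) hφ
  exact hn (iterG_subset_lowerClosure_of_forall_greenAt hgreen (le_max_left i k) q
    (iterG_mono A q (le_max_right i k) hk))

theorem exists_cycle_of_redWitness [Fintype Q] [Fintype X] {n : ℕ} (hb : RedWitness A n b)
    (hn : Fintype.card (Q × (X ⊕ X × X)) ≤ n) :
    ∃ q φ ψ j, φ ∈ iterG A j q ∧ ReflTransGen (WpStep A) (q, φ) (q, ψ) ∧
      ψ.clocks = φ.clocks ∧ ¬ ψ ≤ φ := by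
  obtain ⟨i, j, ⟨q, φ⟩, ⟨q', ψ⟩, hij, hφ, hψ, hstar, hkey⟩ := exists_lt_reflTransGen_eq_of_card_le
    (fun a : Q × Constr X => (a.1, a.2.clocks)) RedWitness.exists_pred hb hn
  obtain ⟨rfl, hclocks⟩ := Prod.mk.inj hkey
  have hmem : φ ∈ iterG A j q := iterG_mono A q hij hφ.1
  exact ⟨q, φ, ψ, j, hmem, hstar, hclocks.symm, fun hle => hψ.2 ⟨φ, hmem, hle⟩⟩

end KleeneIteration

/-! ## The statement -/

theorem stmt15 {Q X : Type} [Fintype Q] [Fintype X] [DecidableEq X] (A : UTA Q X)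
    (p : Q)
    (hred : RedAt A (1 + Fintype.card Q * (Fintype.card X * (Fintype.card X + 1))) p) :
    ¬ ∃ i : ℕ, 0 < i ∧ ∀ q, GreenAt A i q := by
  rintro ⟨i, hi, hgreen⟩
  obtain ⟨i, rfl⟩ := Nat.exists_eq_add_one_of_ne_zero hi.ne'
  rw [add_comm, redAt_succ_iff] at hred
  obtain ⟨φ₀, hφ₀⟩ := hred
  have hcard : Fintype.card (Q × (X ⊕ X × X)) =
      Fintype.card Q * (Fintype.card X * (Fintype.card X + 1)) := by
    simp only [Fintype.card_prod, Fintype.card_sum]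
    ring
  obtain ⟨q, φ, ψ, j, hφ, hcycle, hclocks, hnle⟩ := exists_cycle_of_redWitness hφ₀ hcard.le
  obtain ⟨q', hred⟩ := exists_redAt_succ_of_cycle hφ hcycle hclocks hnle i
  exact hgreen q' hred
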